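/- Let A be a linear relation in a finite-dimensional complex vector space H. Then the proper point spectrum σ_π(A) is a finite set and its cardinality satisfies |σ_π(A)| ≤ dim H. -/

import Mathlib

/-!
Write `C = R_c(A)` and let `B = A + C × C`, which is the relation induced by `A` on `H / C`, pulled
back to `H`. The space `R_∞(A)` is closed under forward `A`-steps, `R_0(A)` under backward
`A`-steps, and both contain `C`, so the same holds for `B`-steps.

Each point of the proper point spectrum gives an eigenvector of `B` outside `C`: walking along a
root chain of a vector outside `C`, some step passes between `C` and its complement
(`exists_eigenvector`, `exists_mul_vector`). It remains to see that these eigenvectors are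
linearly independent modulo `C`.

The key point is `sum_mem_singChain`: if `(x_λ, λ x_λ) ∈ B` for `λ` in a finite set `s` and
`y = ∑ x_λ` satisfies `(0, y) ∈ B`, then `y ∈ C`. For a polynomial `q` put `⟨q⟩ = ∑ q(λ) x_λ`; then
`(⟨q⟩, ⟨X q + a⟩) ∈ B` for every scalar `a`. Starting from `p = ∏ (X - λ)`, for which `⟨p⟩ = 0`, and
dropping the constant coefficient repeatedly (Horner's scheme) one gets a backward chain from `0`
to `⟨1⟩ = y`, so `y ∈ R_0(A)`; and `y ∈ R_∞(A)` since `(0, y) ∈ B`. Hence, modulo `C`, `B` is single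
valued on the span of the eigenvectors for finite eigenvalues, and the usual proof of independence
of eigenvectors applies (`mem_singChain_of_sum_mem`); the same fact separates the eigenvector
at `∞` from the others.
-/

open Submodule Set

variable {H : Type*} [AddCommGroup H] [Module ℂ H]

/-- A linear relation in `H`: a linear subspace of the product `H × H`. -/
abbrev LinRel (H : Type*) [AddCommGroup H] [Module ℂ H] : Type _ := Submodule ℂ (H × H)

namespace LinRel

/-- The relation `A - λ = {(x, y - λ x) : (x,y) ∈ A}`. -/
def shift (A : LinRel H) (lam : ℂ) : LinRel H :=
  A.map ((LinearMap.fst ℂ H H).prod (LinearMap.snd ℂ H H - lam • LinearMap.fst ℂ H H))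

/-- The relation `λ A = {(x, λ y) : (x,y) ∈ A}`. -/
def smulRel (lam : ℂ) (A : LinRel H) : LinRel H :=
  A.map ((LinearMap.fst ℂ H H).prod (lam • LinearMap.snd ℂ H H))

/-- The inverse relation `A⁻¹ = {(y,x) : (x,y) ∈ A}`. -/
def inv (A : LinRel H) : LinRel H :=
  A.map ((LinearMap.snd ℂ H H).prod (LinearMap.fst ℂ H H))

/-- The product (composition) `A B = {(x,y) : ∃ z, (x,z) ∈ B ∧ (z,y) ∈ A}`. -/
def comp (A B : LinRel H) : LinRel H where
  carrier := {p | ∃ z, (p.1, z) ∈ B ∧ (z, p.2) ∈ A}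
  zero_mem' := ⟨0, B.zero_mem, A.zero_mem⟩
  add_mem' := by
    rintro p q ⟨z1, h1, h2⟩ ⟨z2, h3, h4⟩
    exact ⟨z1 + z2, B.add_mem h1 h3, A.add_mem h2 h4⟩
  smul_mem' := by
    rintro c p ⟨z, h1, h2⟩
    exact ⟨c • z, B.smul_mem c h1, A.smul_mem c h2⟩

/-- The identity relation `I = {(x,x) : x ∈ H}`. -/
def idRel : LinRel H := LinearMap.graph (LinearMap.id : H →ₗ[ℂ] H)

/-- Powers: `A⁰ = I` and `Aᵏ = A · Aᵏ⁻¹`. -/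
def pow (A : LinRel H) : ℕ → LinRel H
  | 0 => idRel
  | (k+1) => comp A (pow A k)

/-- The kernel `ker A = {x : (x,0) ∈ A}`. -/
def ker (A : LinRel H) : Submodule ℂ H := A.comap (LinearMap.inl ℂ H H)

/-- The multivalued part `mul A = {y : (0,y) ∈ A}`. -/
def mul (A : LinRel H) : Submodule ℂ H := A.comap (LinearMap.inr ℂ H H)

lemma mem_ker {A : LinRel H} {x : H} : x ∈ ker A ↔ (x, (0:H)) ∈ A := by
  simp [ker, Submodule.mem_comap]

lemma mem_mul {A : LinRel H} {y : H} : y ∈ mul A ↔ ((0:H), y) ∈ A := by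
  simp [mul, Submodule.mem_comap]

lemma ker_pow_le_succ (A : LinRel H) (i : ℕ) : ker (pow A i) ≤ ker (pow A (i+1)) := by
  intro x hx
  rw [mem_ker] at hx ⊢
  exact ⟨0, hx, A.zero_mem⟩

lemma ker_pow_mono (A : LinRel H) : Monotone fun i => ker (pow A i) :=
  monotone_nat_of_le_succ (ker_pow_le_succ A)

lemma mul_pow_le_succ (A : LinRel H) : ∀ i, mul (pow A i) ≤ mul (pow A (i+1)) := by
  intro i
  induction i with
  | zero =>
    intro y hy
    rw [mem_mul] at hy ⊢
    have : y = 0 := by simpa [pow, idRel, LinearMap.mem_graph_iff] using hy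
    subst this
    exact Submodule.zero_mem _
  | succ i ih =>
    intro y hy
    rw [mem_mul] at hy ⊢
    obtain ⟨w, hw, hwy⟩ := hy
    exact ⟨w, mem_mul.mp (ih (mem_mul.mpr hw)), hwy⟩

lemma mul_pow_mono (A : LinRel H) : Monotone fun i => mul (pow A i) :=
  monotone_nat_of_le_succ (mul_pow_le_succ A)

/-- The root space `R_λ(A) = ⋃_{i ≥ 1} ker (A - λ)ⁱ`. -/
def rootSpace (A : LinRel H) (lam : ℂ) : Submodule ℂ H where
  carrier := ⋃ i : ℕ, (ker (pow (shift A lam) (i+1)) : Set H)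
  zero_mem' := Set.mem_iUnion.2 ⟨0, Submodule.zero_mem _⟩
  add_mem' := by
    intro a b ha hb
    obtain ⟨i, hi⟩ := Set.mem_iUnion.1 ha
    obtain ⟨j, hj⟩ := Set.mem_iUnion.1 hb
    exact Set.mem_iUnion.2 ⟨max i j, Submodule.add_mem _
      (ker_pow_mono _ (by omega : i + 1 ≤ max i j + 1) hi)
      (ker_pow_mono _ (by omega : j + 1 ≤ max i j + 1) hj)⟩
  smul_mem' := by
    intro c a ha
    obtain ⟨i, hi⟩ := Set.mem_iUnion.1 ha
    exact Set.mem_iUnion.2 ⟨i, Submodule.smul_mem _ c hi⟩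

/-- The root space at infinity `R_∞(A) = ⋃_{i ≥ 1} mul Aⁱ`. -/
def rootInf (A : LinRel H) : Submodule ℂ H where
  carrier := ⋃ i : ℕ, (mul (pow A (i+1)) : Set H)
  zero_mem' := Set.mem_iUnion.2 ⟨0, Submodule.zero_mem _⟩
  add_mem' := by
    intro a b ha hb
    obtain ⟨i, hi⟩ := Set.mem_iUnion.1 ha
    obtain ⟨j, hj⟩ := Set.mem_iUnion.1 hb
    exact Set.mem_iUnion.2 ⟨max i j, Submodule.add_mem _
      (mul_pow_mono _ (by omega : i + 1 ≤ max i j + 1) hi)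
      (mul_pow_mono _ (by omega : j + 1 ≤ max i j + 1) hj)⟩
  smul_mem' := by
    intro c a ha
    obtain ⟨i, hi⟩ := Set.mem_iUnion.1 ha
    exact Set.mem_iUnion.2 ⟨i, Submodule.smul_mem _ c hi⟩

/-- The singular chain space `R_c(A) = R_0(A) ∩ R_∞(A)`. -/
def singChain (A : LinRel H) : Submodule ℂ H := rootSpace A 0 ⊓ rootInf A

/-- The root space at a point of `ℂ ∪ {∞}` (modelled as `Option ℂ`, with `none = ∞`). -/
def rootSpaceE (A : LinRel H) : Option ℂ → Submodule ℂ H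
  | none => rootInf A
  | some lam => rootSpace A lam

/-- `λ ∈ ℂ ∪ {∞}` is an eigenvalue of `A`. -/
def isEigenvalue (A : LinRel H) : Option ℂ → Prop
  | none => mul A ≠ ⊥
  | some lam => ker (shift A lam) ≠ ⊥

end LinRel

namespace LinRel

open Polynomial

lemma mem_shift {A : LinRel H} {lam : ℂ} {x y : H} :
    (x, y) ∈ shift A lam ↔ (x, y + lam • x) ∈ A := by
  simp only [shift, Submodule.mem_map, Prod.exists, LinearMap.prod_apply, Function.prod,
    LinearMap.fst_apply, LinearMap.sub_apply, LinearMap.snd_apply, LinearMap.smul_apply,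
    Prod.mk.injEq]
  constructor
  · rintro ⟨a, b, h, rfl, rfl⟩
    simpa using h
  · intro h
    exact ⟨x, _, h, rfl, by simp⟩

lemma shift_zero (A : LinRel H) : shift A 0 = A := by
  ext ⟨x, y⟩
  simp [mem_shift]

lemma mem_pow_zero {A : LinRel H} {x y : H} : (x, y) ∈ pow A 0 ↔ y = x := by
  simp [pow, idRel, LinearMap.mem_graph_iff]

lemma mem_pow_succ_of_mem {A : LinRel H} {x y : H} (h : (x, y) ∈ A) :
    ∀ (k : ℕ) (z : H), (y, z) ∈ pow A k → (x, z) ∈ pow A (k + 1) := by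
  intro k
  induction k with
  | zero =>
    intro z hz
    rw [mem_pow_zero] at hz
    subst hz
    exact ⟨x, mem_pow_zero.2 rfl, h⟩
  | succ k ih =>
    rintro z ⟨w, hw, hwz⟩
    exact ⟨w, ih w hw, hwz⟩

lemma mem_rootInf {A : LinRel H} {y : H} : y ∈ rootInf A ↔ ∃ i, (0, y) ∈ pow A (i + 1) := by
  change y ∈ (⋃ i : ℕ, (mul (pow A (i+1)) : Set H)) ↔ _
  simp [mem_mul]

lemma mem_rootSpace {A : LinRel H} {lam : ℂ} {x : H} :
    x ∈ rootSpace A lam ↔ ∃ i, (x, 0) ∈ pow (shift A lam) (i + 1) := by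
  change x ∈ (⋃ i : ℕ, (ker (pow (shift A lam) (i+1)) : Set H)) ↔ _
  simp [mem_ker]

lemma rootInf_forward {A : LinRel H} {x y : H} (h : (x, y) ∈ A) (hx : x ∈ rootInf A) :
    y ∈ rootInf A := by
  obtain ⟨i, hi⟩ := mem_rootInf.1 hx
  exact mem_rootInf.2 ⟨i + 1, x, hi, h⟩

lemma rootSpace_zero_backward {A : LinRel H} {x y : H} (h : (x, y) ∈ A)
    (hy : y ∈ rootSpace A 0) : x ∈ rootSpace A 0 := by
  obtain ⟨i, hi⟩ := mem_rootSpace.1 hy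
  rw [shift_zero] at hi
  refine mem_rootSpace.2 ⟨i + 1, ?_⟩
  rw [shift_zero]
  exact mem_pow_succ_of_mem h _ _ hi

/-- The relation induced by `A` on `H / R_c(A)`, encoded as its preimage `A + R_c(A) × R_c(A)`
in `H × H`. -/
def modChain (A : LinRel H) : LinRel H := A ⊔ (singChain A).prod (singChain A)

lemma mem_modChain_of_mem {A : LinRel H} {p : H × H} (h : p ∈ A) : p ∈ modChain A :=
  (le_sup_left : A ≤ modChain A) h

lemma mem_modChain_of_singChain {A : LinRel H} {c d : H} (hc : c ∈ singChain A)
    (hd : d ∈ singChain A) : (c, d) ∈ modChain A :=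
  (le_sup_right : (singChain A).prod (singChain A) ≤ modChain A) ⟨hc, hd⟩

lemma mem_modChain {A : LinRel H} {x y : H} (h : (x, y) ∈ modChain A) :
    ∃ c ∈ singChain A, ∃ d ∈ singChain A, (x - c, y - d) ∈ A := by
  obtain ⟨p, hp, ⟨c, d⟩, hq, e⟩ := Submodule.mem_sup.1 h
  refine ⟨c, hq.1, d, hq.2, ?_⟩
  have : p = (x - c, y - d) := eq_sub_of_add_eq e
  rwa [← this]

lemma modChain_forward {A : LinRel H} {x y : H} (h : (x, y) ∈ modChain A)
    (hx : x ∈ rootInf A) : y ∈ rootInf A := by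
  obtain ⟨c, hc, d, hd, h⟩ := mem_modChain h
  simpa using (rootInf A).add_mem (rootInf_forward h (sub_mem hx hc.2)) hd.2

lemma modChain_backward {A : LinRel H} {x y : H} (h : (x, y) ∈ modChain A)
    (hy : y ∈ rootSpace A 0) : x ∈ rootSpace A 0 := by
  obtain ⟨c, hc, d, hd, h⟩ := mem_modChain h
  simpa using (rootSpace A 0).add_mem (rootSpace_zero_backward h (sub_mem hy hd.1)) hc.1

/-- A root chain at `lam` of a vector outside `R_c(A)` has a step that
enters `R_c(A)`, and the vector before that step is an eigenvector modulo `R_c(A)`. -/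
lemma exists_eigenvector {A : LinRel H} {lam : ℂ} (h : ¬ rootSpace A lam ≤ singChain A) :
    ∃ x, x ∉ singChain A ∧ (x, lam • x) ∈ modChain A := by
  by_contra! hcon
  have key : ∀ (k : ℕ) (x z : H), (x, z) ∈ pow (shift A lam) k → z ∈ singChain A →
      x ∈ singChain A := by
    intro k
    induction k with
    | zero =>
      intro x z hxz hz
      rw [mem_pow_zero] at hxz
      exact hxz ▸ hz
    | succ k ih =>
      rintro x z ⟨w, hxw, hwz⟩ hz
      refine ih x w hxw ?_
      by_contra hw
      refine hcon w hw ?_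
      have h1 := mem_modChain_of_mem (mem_shift.1 hwz)
      have h2 := mem_modChain_of_singChain (singChain A).zero_mem hz
      simpa using sub_mem h1 h2
  refine h fun x hx => ?_
  obtain ⟨i, hi⟩ := mem_rootSpace.1 hx
  exact key _ _ _ hi (Submodule.zero_mem _)

lemma exists_mul_vector {A : LinRel H} (h : ¬ rootInf A ≤ singChain A) :
    ∃ y, y ∉ singChain A ∧ ((0 : H), y) ∈ modChain A := by
  by_contra! hcon
  have key : ∀ (k : ℕ) (x z : H), (x, z) ∈ pow A k → x ∈ singChain A → z ∈ singChain A := by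
    intro k
    induction k with
    | zero =>
      intro x z hxz hz
      rw [mem_pow_zero] at hxz
      exact hxz ▸ hz
    | succ k ih =>
      rintro x z ⟨w, hxw, hwz⟩ hx
      by_contra hz
      refine hcon z hz ?_
      have h1 := mem_modChain_of_mem hwz
      have h2 := mem_modChain_of_singChain (ih x w hxw hx) (singChain A).zero_mem
      simpa using sub_mem h1 h2
  refine h fun x hx => ?_
  obtain ⟨i, hi⟩ := mem_rootInf.1 hx
  exact key _ _ _ hi (Submodule.zero_mem _)

lemma sum_mem_modChain {A : LinRel H} (s : Finset ℂ) (x : ℂ → H)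
    (hx : ∀ l ∈ s, (x l, l • x l) ∈ modChain A) (f : ℂ → ℂ) :
    (∑ l ∈ s, f l • x l, ∑ l ∈ s, (l * f l) • x l) ∈ modChain A := by
  have h := Submodule.sum_mem (modChain A) (t := s) (f := fun l => f l • (x l, l • x l))
    fun l hl => Submodule.smul_mem _ _ (hx l hl)
  convert h using 1
  ext
  · simp [Prod.fst_sum]
  · simp [Prod.snd_sum, smul_smul, mul_comm]

/-- Modulo `R_c(A)`, the multivalued part meets the span of the eigenvectors for finite
eigenvalues trivially. -/
lemma sum_mem_singChain {A : LinRel H} (s : Finset ℂ) (x : ℂ → H)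
    (hx : ∀ l ∈ s, (x l, l • x l) ∈ modChain A)
    (hy : ((0 : H), ∑ l ∈ s, x l) ∈ modChain A) : ∑ l ∈ s, x l ∈ singChain A := by
  refine ⟨?_, modChain_forward hy (Submodule.zero_mem _)⟩
  -- Horner descent: each division by `X` is one backward step of the relation.
  have key : ∀ (n : ℕ) (p : ℂ[X]), p.natDegree = n → p ≠ 0 →
      ∑ l ∈ s, p.eval l • x l ∈ rootSpace A 0 → ∑ l ∈ s, x l ∈ rootSpace A 0 := by
    intro n
    induction n with
    | zero =>
      intro p hp hp0 h
      obtain ⟨a, rfl⟩ := natDegree_eq_zero.1 hp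
      have ha : a ≠ 0 := by rintro rfl; simp at hp0
      simp only [eval_C, ← Finset.smul_sum] at h
      exact (Submodule.smul_mem_iff _ ha).1 h
    | succ n ih =>
      intro p hp hp0 h
      have hd : p.divX.natDegree = n := by rw [natDegree_divX_eq_natDegree_tsub_one, hp]; rfl
      refine ih p.divX hd ?_ ?_
      · intro h0
        have := divX_mul_X_add p
        rw [h0, zero_mul, zero_add] at this
        rw [← this, natDegree_C] at hp
        omega
      · refine modChain_backward ?_ h
        have h1 := sum_mem_modChain s x hx fun l => p.divX.eval l
        have h2 := add_mem h1 (Submodule.smul_mem _ (p.coeff 0) hy)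
        convert h2 using 1
        ext
        · simp
        · simp only [Prod.snd_add, Prod.smul_snd, Finset.smul_sum, ← Finset.sum_add_distrib,
            ← add_smul]
          refine Finset.sum_congr rfl fun l _ => ?_
          have he := congrArg (eval l) (divX_mul_X_add p)
          simp only [eval_add, eval_mul, eval_X, eval_C] at he
          rw [← he, mul_comm l]
  refine key _ (∏ l ∈ s, (X - C l)) rfl (Finset.prod_ne_zero_iff.2 fun l _ => X_sub_C_ne_zero l) ?_
  have : ∑ l ∈ s, (∏ m ∈ s, (X - C m)).eval l • x l = 0 := by
    refine Finset.sum_eq_zero fun l hl => ?_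
    rw [eval_prod, Finset.prod_eq_zero hl (by simp), zero_smul]
  rw [this]
  exact Submodule.zero_mem _

/-- Eigenvectors for distinct finite eigenvalues are independent modulo `R_c(A)`. -/
lemma mem_singChain_of_sum_mem {A : LinRel H} (s : Finset ℂ) :
    ∀ x : ℂ → H, (∀ l ∈ s, (x l, l • x l) ∈ modChain A) → ∑ l ∈ s, x l ∈ singChain A →
      ∀ l ∈ s, x l ∈ singChain A := by
  induction s using Finset.induction_on with
  | empty => simp
  | insert a s ha ih =>
    intro x hx hs
    have hmul : ∑ l ∈ insert a s, l • x l ∈ singChain A := by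
      refine sum_mem_singChain _ _ (fun l hl => ?_) ?_
      · exact Submodule.smul_mem _ l (hx l hl)
      · have h1 := sum_mem_modChain _ x hx fun _ => 1
        have h2 := mem_modChain_of_singChain hs (singChain A).zero_mem
        simpa using sub_mem h1 h2
    -- Eliminate `x a` as in the usual independence proof.
    have hsub : ∑ l ∈ s, (l - a) • x l ∈ singChain A := by
      have h := sub_mem hmul (Submodule.smul_mem _ a hs)
      rw [Finset.smul_sum, ← Finset.sum_sub_distrib, Finset.sum_insert ha, sub_self, zero_add] at h
      simpa only [sub_smul] using h
    have hmem : ∀ l ∈ s, x l ∈ singChain A := by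
      intro l hl
      have h := ih (fun l => (l - a) • x l) (fun l hl => ?_) hsub l hl
      · exact (Submodule.smul_mem_iff _ (sub_ne_zero.2 (ne_of_mem_of_not_mem hl ha))).1 h
      · have := Submodule.smul_mem _ (l - a) (hx l (Finset.mem_insert_of_mem hl))
        simpa [smul_comm l] using this
    intro l hl
    rcases Finset.mem_insert.1 hl with rfl | hl
    · rw [Finset.sum_insert ha] at hs
      exact (Submodule.add_mem_iff_left _ (Submodule.sum_mem _ hmem)).1 hs
    · exact hmem l hl

/-- Independence modulo `R_c(A)` of eigenvectors at finite points together with one vector `y` in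
the multivalued part. -/
lemma mem_singChain_of_add_mem {A : LinRel H} (s : Finset ℂ) (x : ℂ → H) (y : H)
    (hx : ∀ l ∈ s, (x l, l • x l) ∈ modChain A) (hy : ((0 : H), y) ∈ modChain A)
    (h : y + ∑ l ∈ s, x l ∈ singChain A) :
    y ∈ singChain A ∧ ∀ l ∈ s, x l ∈ singChain A := by
  have h0 : ∑ l ∈ s, x l ∈ singChain A := by
    refine sum_mem_singChain s x hx ?_
    simpa using sub_mem (mem_modChain_of_singChain (singChain A).zero_mem h) hy
  exact ⟨(Submodule.add_mem_iff_left _ h0).1 h, mem_singChain_of_sum_mem s x hx h0⟩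

end LinRel

open LinRel in
/-- One vector outside `R_c(A)` for each point of `S`, an eigenvector modulo `R_c(A)` at that point:
such a family is linearly independent in `H / R_c(A)`. -/
lemma linearIndepOn_eigenvectors (A : LinRel H) (S : Set (Option ℂ)) (e : Option ℂ → H)
    (he : ∀ l ∈ S, e l ∉ singChain A)
    (hnone : none ∈ S → ((0 : H), e none) ∈ modChain A)
    (hsome : ∀ l : ℂ, some l ∈ S → (e (some l), l • e (some l)) ∈ modChain A) :
    LinearIndepOn ℂ ((singChain A).mkQ ∘ e) S := by
  classical
  rw [linearIndepOn_iff']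
  intro t g ht hsum
  have hmem : ∑ i ∈ t, g i • e i ∈ singChain A := by
    rw [← (singChain A).ker_mkQ, LinearMap.mem_ker, map_sum]
    simpa using hsum
  have hx : ∀ l ∈ Finset.eraseNone t,
      (g (some l) • e (some l), l • g (some l) • e (some l)) ∈ modChain A := by
    intro l hl
    have := Submodule.smul_mem _ (g (some l)) (hsome l (ht (Finset.mem_eraseNone.1 hl)))
    simpa [smul_comm l] using this
  have conclude : ∀ i ∈ t, g i • e i ∈ singChain A → g i = 0 := by
    intro i hi h
    by_contra h0
    exact he i (ht hi) ((Submodule.smul_mem_iff _ h0).1 h)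
  by_cases hn : none ∈ t
  · rw [← Finset.insert_eq_of_mem hn, ← Finset.insertNone_eraseNone, Finset.sum_insertNone] at hmem
    have hy : ((0 : H), g none • e none) ∈ modChain A := by
      simpa using Submodule.smul_mem _ (g none) (hnone (ht hn))
    obtain ⟨h1, h2⟩ := mem_singChain_of_add_mem _ (fun l => g (some l) • e (some l)) _ hx hy hmem
    rintro (_ | l) hi
    · exact conclude _ hi h1
    · exact conclude _ hi (h2 l (Finset.mem_eraseNone.2 hi))
  · have ht' : t = (Finset.eraseNone t).map Function.Embedding.some := by
      rw [Finset.map_some_eraseNone, Finset.erase_eq_of_notMem hn]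
    rw [ht', Finset.sum_map] at hmem
    have h2 := mem_singChain_of_sum_mem _ (fun l => g (some l) • e (some l)) hx hmem
    rintro (_ | l) hi
    · exact absurd hi hn
    · exact conclude _ hi (h2 l (Finset.mem_eraseNone.2 hi))

/-- in a finite-dimensional space the proper point spectrum
`σ_π(A) = {λ ∈ ℂ ∪ {∞} : R_λ(A) ⊄ R_c(A)}` is finite with `|σ_π(A)| ≤ dim H`. -/
theorem statement_16 (A : LinRel H) [FiniteDimensional ℂ H] :
    {lam : Option ℂ | ¬ LinRel.rootSpaceE A lam ≤ LinRel.singChain A}.Finite ∧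
      {lam : Option ℂ | ¬ LinRel.rootSpaceE A lam ≤ LinRel.singChain A}.ncard ≤
        Module.finrank ℂ H := by
  set S : Set (Option ℂ) := {lam | ¬ LinRel.rootSpaceE A lam ≤ LinRel.singChain A} with hS
  have hex : ∀ l : Option ℂ, ∃ v : H, l ∈ S → v ∉ LinRel.singChain A ∧
      (l = none → ((0 : H), v) ∈ LinRel.modChain A) ∧
      (∀ m : ℂ, l = some m → (v, m • v) ∈ LinRel.modChain A) := by
    intro l
    by_cases hl : l ∈ S
    · rcases l with _ | m
      · obtain ⟨y, hy, h⟩ := LinRel.exists_mul_vector hl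
        exact ⟨y, fun _ => ⟨hy, fun _ => h, by simp⟩⟩
      · obtain ⟨y, hy, h⟩ := LinRel.exists_eigenvector hl
        refine ⟨y, fun _ => ⟨hy, by simp, ?_⟩⟩
        rintro _ ⟨⟩
        exact h
    · exact ⟨0, fun h => absurd h hl⟩
  choose e he using hex
  have hli : LinearIndependent ℂ fun l : S => e l :=
    LinearIndependent.of_comp (LinRel.singChain A).mkQ
      (linearIndepOn_eigenvectors A S e (fun l hl => (he l hl).1)
        (fun h => (he _ h).2.1 rfl) (fun l h => (he _ h).2.2 l rfl))
  have hfin : Finite S := hli.finite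
  refine ⟨S.toFinite, ?_⟩
  have := Fintype.ofFinite S
  rw [← Nat.card_coe_set_eq, Nat.card_eq_fintype_card]
  exact hli.fintype_card_le_finrank
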